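/- arXiv:math/0306246 — 3 statements merged into one kernel-verified Lean document; each statement's English description precedes it below -/
import Mathlib

section
/- For every ε > 0: lim_{k→∞} τ(k, ⌈(2+ε)k⌉) = 0. -/
open Finset Filter MeasureTheory

open scoped Classical

noncomputable section

/-- The vertex set `{0,1}^d` of the 0/1-cube, as a finite subset of `ℝ^d`. -/
def cube01 (d : ℕ) : Finset (Fin d → ℝ) :=
  (Finset.univ : Finset (Fin d → Bool)).image (fun f i => if f i then 1 else 0)

/-- The vertex set `{-1,+1}^d` of the `±1`-cube, as a finite subset of `ℝ^d`. -/
def pmCube (d : ℕ) : Finset (Fin d → ℝ) :=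
  (Finset.univ : Finset (Fin d → Bool)).image (fun f i => if f i then 1 else -1)

/-- The all-one vector `𝟙 ∈ ℝ^d`. -/
def allOne (d : ℕ) : Fin d → ℝ := fun _ => 1

/-- `C^d_* = {-1,+1}^d \ {-𝟙, 𝟙}`. -/
def pmCubeStar (d : ℕ) : Finset (Fin d → ℝ) :=
  (pmCube d) \ {-(allOne d), allOne d}

/-- `{v,w}` spans an edge (a one-dimensional face) of the polytope `P`:
`v ≠ w` and the segment `[v,w]` is an (exposed) face of `P`. -/
def IsEdge {d : ℕ} (P : Set (Fin d → ℝ)) (v w : Fin d → ℝ) : Prop :=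
  v ≠ w ∧ IsExposed ℝ P (segment ℝ v w)

/-- The number of edges of the graph of the polytope `conv X`. -/
noncomputable def edgeCount {d : ℕ} (X : Finset (Fin d → ℝ)) : ℕ :=
  ((X.powersetCard 2).filter (fun e =>
      ∃ v w, e = {v, w} ∧ IsEdge (convexHull ℝ (X : Set (Fin d → ℝ))) v w)).card

/-- The density of the graph of the polytope `conv X` (whose vertex set is `X`
when `X` consists of 0/1- or `±1`-points): number of edges divided by `C(|X|,2)`. -/
noncomputable def graphDensity {d : ℕ} (X : Finset (Fin d → ℝ)) : ℝ :=
  (edgeCount X : ℝ) / (X.card.choose 2 : ℝ)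

/-- The expected graph-density of the convex hull of a uniformly random
`n`-element subset of `{0,1}^d`. -/
noncomputable def expDensity (d n : ℕ) : ℝ :=
  (∑ X ∈ (cube01 d).powersetCard n, graphDensity X) /
    (((cube01 d).powersetCard n).card : ℝ)

/-- The Hamming distance of `v, w ∈ ℝ^d`. -/
def hdist {d : ℕ} (v w : Fin d → ℝ) : ℕ :=
  (Finset.univ.filter (fun i => v i ≠ w i)).card

/-- `C(v,w)`: the points of the `±1`-cube agreeing with `v` and `w` wherever these agree
(the vertex set of the smallest face of the cube containing `v` and `w`). -/
def cubeFace {d : ℕ} (v w : Fin d → ℝ) : Finset (Fin d → ℝ) :=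
  (pmCube d).filter (fun x => ∀ i, v i = w i → x i = v i)

/-- `C_*(v,w) = C(v,w) \ {v,w}`. -/
def cubeFaceStar {d : ℕ} (v w : Fin d → ℝ) : Finset (Fin d → ℝ) :=
  (cubeFace v w) \ {v, w}

/-- The long-edge probability `τ(k,m)`: the probability that for a uniformly random
`m`-element subset `Y ⊆ C^k_*`, `conv Y ∩ conv{-𝟙,𝟙} = ∅`. -/
noncomputable def tau (k m : ℕ) : ℝ :=
  ((((pmCubeStar k).powersetCard m).filter (fun Y =>
      convexHull ℝ (Y : Set (Fin k → ℝ)) ∩ segment ℝ (-(allOne k)) (allOne k) = ∅)).card : ℝ) /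
    ((((pmCubeStar k).powersetCard m)).card : ℝ)

/-- `Y ∩ (-Y) = ∅`. -/
def NoAntipodal {k : ℕ} (Y : Finset (Fin k → ℝ)) : Prop := ∀ y ∈ Y, -y ∉ Y

/-- `α(k,m)`: the conditional probability that `conv Y ∩ conv{-𝟙,𝟙} = ∅`
given `Y ∩ (-Y) = ∅`, for a uniformly random `m`-element subset `Y ⊆ C^k_*`. -/
noncomputable def alpha (k m : ℕ) : ℝ :=
  ((((pmCubeStar k).powersetCard m).filter (fun (Y : Finset (Fin k → ℝ)) =>
      convexHull ℝ (Y : Set (Fin k → ℝ)) ∩ segment ℝ (-(allOne k)) (allOne k) = ∅ ∧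
        NoAntipodal Y)).card : ℝ) /
    ((((pmCubeStar k).powersetCard m).filter (fun Y => NoAntipodal Y)).card : ℝ)

/-- The sample space for a uniformly random `n`-element subset `X ⊆ {-1,+1}^d`
together with a uniformly random `2`-element subset `{v,w} ⊆ X`. -/
def edgeSpace (d n : ℕ) : Finset (Finset (Fin d → ℝ) × Finset (Fin d → ℝ)) :=
  (((pmCube d).powersetCard n) ×ˢ ((pmCube d).powersetCard 2)).filter (fun p => p.2 ⊆ p.1)

/-- The event that the chosen pair `{v,w}` is an edge of `conv X`. -/
def EdgeEvent {d : ℕ} (p : Finset (Fin d → ℝ) × Finset (Fin d → ℝ)) : Prop :=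
  ∃ v w, p.2 = {v, w} ∧ IsEdge (convexHull ℝ (p.1 : Set (Fin d → ℝ))) v w

/-- The event that the chosen pair `{v,w}` satisfies `dist(v,w) = k`. -/
def DistEvent {d : ℕ} (k : ℕ) (p : Finset (Fin d → ℝ) × Finset (Fin d → ℝ)) : Prop :=
  ∃ v w, v ≠ w ∧ p.2 = {v, w} ∧ hdist v w = k

/-- The event that the chosen pair `{v,w}` satisfies `dist(v,w) = k` and
`#(X ∩ C_*(v,w)) = m`. -/
def DistCapEvent {d : ℕ} (k m : ℕ) (p : Finset (Fin d → ℝ) × Finset (Fin d → ℝ)) : Prop :=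
  ∃ v w, v ≠ w ∧ p.2 = {v, w} ∧ hdist v w = k ∧ (p.1 ∩ cubeFaceStar v w).card = m

/-- The edge probability `π(d,n)`. -/
noncomputable def piEdge (d n : ℕ) : ℝ :=
  (((edgeSpace d n).filter (fun p => EdgeEvent p)).card : ℝ) / ((edgeSpace d n).card : ℝ)

/-- The conditional edge probability `π_k(d,n)` given `dist(v,w) = k`. -/
noncomputable def piEdgeK (d n k : ℕ) : ℝ :=
  (((edgeSpace d n).filter (fun p => EdgeEvent p ∧ DistEvent k p)).card : ℝ) /
    (((edgeSpace d n).filter (fun p => DistEvent k p)).card : ℝ)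

/-- `φ : ℝ^{r+1} → ℝ^r`: the orthogonal projection onto the hyperplane
`H_𝟙 = {x : 𝟙ᵀx = 0}` (namely `x ↦ x - ((𝟙ᵀx)/(r+1))·𝟙`), followed by the
projection to the first `r` coordinates. -/
noncomputable def phi (r : ℕ) (x : Fin (r + 1) → ℝ) : Fin r → ℝ :=
  fun i => x i.castSucc - (∑ j, x j) / (r + 1 : ℝ)

/-- The vector configuration `V_r = φ(C^{r+1}_*)`. -/
noncomputable def Vr (r : ℕ) : Finset (Fin r → ℝ) := (pmCubeStar (r + 1)).image (phi r)

/-- The half configuration `V_r^+ = φ({v ∈ C^{r+1}_* : v_{r+1} = +1})`. -/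
noncomputable def VrPlus (r : ℕ) : Finset (Fin r → ℝ) :=
  (((pmCubeStar (r + 1)).filter (fun v => v (Fin.last r) = 1))).image (phi r)

/-- The number of sign vectors `ε ∈ {-1,+1}^S` with `0 ∉ conv{ε_s · s : s ∈ S}`. -/
noncomputable def signCount {r : ℕ} (S : Finset (Fin r → ℝ)) : ℕ :=
  ((Finset.univ : Finset (↥S → Bool)).filter (fun ε =>
      (0 : Fin r → ℝ) ∉ convexHull ℝ
        (Set.range fun s : ↥S => (if ε s then (1 : ℝ) else -1) • (s : Fin r → ℝ)))).card

/-- `α(S)`: the probability that `0 ∉ conv{ε_s · s : s ∈ S}` for a uniformly random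
sign vector `ε ∈ {-1,+1}^S`. -/
noncomputable def alphaSet {r : ℕ} (S : Finset (Fin r → ℝ)) : ℝ :=
  (signCount S : ℝ) / ((Finset.univ : Finset (↥S → Bool)).card : ℝ)

/-- The complement `ℝ^r \ ⋃_{s ∈ S} H(s)` of the hyperplane arrangement `ℋ(S)`. -/
def arrComplement {r : ℕ} (S : Finset (Fin r → ℝ)) : Set (Fin r → ℝ) :=
  {x | ∀ s ∈ S, ∑ i, s i * x i ≠ 0}

/-- `χ(S)`: the number of chambers (connected components of the complement)
of the hyperplane arrangement `ℋ(S)`. -/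
noncomputable def chi {r : ℕ} (S : Finset (Fin r → ℝ)) : ℕ :=
  Nat.card (ConnectedComponents ↥(arrComplement S))

/-- `b(p,q) = ∑_{i=0}^p C(q,i)`. -/
def bFn (p q : ℕ) : ℕ := ∑ i ∈ Finset.range (p + 1), q.choose i

/-- The subsets of `S` cut out strictly by a linear functional. -/
def cutFamily {k : ℕ} (S : Finset (Fin k → ℝ)) : Finset (Finset ↥S) :=
  Finset.univ.filter (fun T => ∃ f : (Fin k → ℝ) →ₗ[ℝ] ℝ,
    ∀ s : ↥S, (s ∈ T → 0 < f s.1) ∧ (s ∉ T → f s.1 < 0))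

lemma card_cutFamily_le {k : ℕ} (S : Finset (Fin k → ℝ)) :
    (cutFamily S).card ≤ ∑ i ∈ Finset.range (k + 1), S.card.choose i := by
  have hvc : (cutFamily S).vcDim ≤ k := by
    unfold Finset.vcDim
    refine Finset.sup_le fun U hU => ?_
    rw [Finset.mem_shatterer] at hU
    by_contra hlt
    push Not at hlt
    have hcard : Module.finrank ℝ (Fin k → ℝ) < (U.map (Function.Embedding.subtype _)).card := by
      simpa using hlt
    obtain ⟨c, hsum, x, hx, hcx⟩ := Module.exists_nontrivial_relation_of_finrank_lt_card hcard
    rw [Finset.sum_map] at hsum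
    obtain ⟨x', hx', rfl⟩ := Finset.mem_map.1 hx
    obtain ⟨T, hT, hUT⟩ := hU (t := U.filter (fun s => 0 < c s.1)) (Finset.filter_subset _ _)
    obtain ⟨f, hf⟩ := (Finset.mem_filter.1 hT).2
    have key : ∀ s ∈ U, 0 ≤ c s.1 * f s.1 ∧ (c s.1 ≠ 0 → 0 < c s.1 * f s.1) := by
      intro s hs
      have hiff : s ∈ T ↔ 0 < c s.1 := by
        have := Finset.ext_iff.1 hUT s
        simpa [hs] using this
      by_cases hsT : s ∈ T
      · have h1 := hiff.1 hsT
        have h2 := (hf s).1 hsT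
        exact ⟨(mul_pos h1 h2).le, fun _ => mul_pos h1 h2⟩
      · have h1 : c s.1 ≤ 0 := not_lt.1 (fun h => hsT (hiff.2 h))
        have h2 := (hf s).2 hsT
        exact ⟨mul_nonneg_of_nonpos_of_nonpos h1 h2.le,
          fun h => mul_pos_of_neg_of_neg (lt_of_le_of_ne h1 h) h2⟩
    have h0 : ∑ s ∈ U, c s.1 * f s.1 = 0 := by
      have := congrArg f hsum
      simpa using this
    have hpos : 0 < ∑ s ∈ U, c s.1 * f s.1 :=
      Finset.sum_pos' (fun s hs => (key s hs).1) ⟨x', hx', (key x' hx').2 hcx⟩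
    exact absurd h0 hpos.ne'
  calc (cutFamily S).card ≤ (cutFamily S).shatterer.card := Finset.card_le_card_shatterer _
    _ ≤ ∑ i ∈ Finset.Iic (cutFamily S).vcDim, (Fintype.card ↥S).choose i :=
        Finset.card_shatterer_le_sum_vcDim
    _ ≤ ∑ i ∈ Finset.range (k + 1), (Fintype.card ↥S).choose i := by
        refine Finset.sum_le_sum_of_subset fun i hi => ?_
        simp only [Finset.mem_Iic, Finset.mem_range] at *
        omega
    _ = _ := by simp

lemma two_pow_mul_choose_le (N m : ℕ) : 2 ^ m * N.choose m ≤ (2 * N).choose m := by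
  have h : 2 ^ m * N.descFactorial m ≤ (2 * N).descFactorial m := by
    induction m with
    | zero => simp
    | succ m ih =>
      rw [Nat.descFactorial_succ, Nat.descFactorial_succ]
      calc 2 ^ (m + 1) * ((N - m) * N.descFactorial m)
          = (2 * (N - m)) * (2 ^ m * N.descFactorial m) := by ring
        _ ≤ (2 * N - m) * (2 * N).descFactorial m := Nat.mul_le_mul (by omega) ih
  rw [Nat.descFactorial_eq_factorial_mul_choose, Nat.descFactorial_eq_factorial_mul_choose] at h
  refine Nat.le_of_mul_le_mul_left ?_ (Nat.factorial_pos m)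
  calc _ = 2 ^ m * (m.factorial * N.choose m) := by ring
    _ ≤ _ := h

lemma exists_pos_of_disjoint {k : ℕ} (Y : Finset (Fin k → ℝ))
    (h : convexHull ℝ (Y : Set (Fin k → ℝ)) ∩ segment ℝ (-(allOne k)) (allOne k) = ∅) :
    ∃ f : (Fin k → ℝ) →ₗ[ℝ] ℝ, ∀ y ∈ Y, 0 < f y := by
  have h0 : (0 : Fin k → ℝ) ∉ convexHull ℝ (Y : Set (Fin k → ℝ)) := by
    intro h1
    have h2 : (0 : Fin k → ℝ) ∈ segment ℝ (-(allOne k)) (allOne k) :=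
      ⟨1/2, 1/2, by norm_num, by norm_num, by norm_num, by simp⟩
    have : (0 : Fin k → ℝ) ∈ (∅ : Set (Fin k → ℝ)) := h ▸ ⟨h1, h2⟩
    exact this
  obtain ⟨f, u, hu, hf⟩ := geometric_hahn_banach_point_closed (convex_convexHull ℝ _)
    (Y.finite_toSet.isClosed_convexHull ℝ) h0
  refine ⟨f.toLinearMap, fun y hy => ?_⟩
  have := hf y (subset_convexHull ℝ _ hy)
  simp only [map_zero] at hu
  exact hu.trans this

lemma neg_mem_pmCubeStar {k : ℕ} {y : Fin k → ℝ} (h : y ∈ pmCubeStar k) :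
    -y ∈ pmCubeStar k := by
  simp only [pmCubeStar, pmCube, Finset.mem_sdiff, Finset.mem_image, Finset.mem_univ, true_and,
    Finset.mem_insert, Finset.mem_singleton, not_or] at *
  obtain ⟨⟨f, rfl⟩, h1, h2⟩ := h
  refine ⟨⟨fun i => !(f i), ?_⟩, ?_, ?_⟩
  · funext i
    by_cases hi : f i <;> simp [hi]
  · intro h; exact h2 (neg_injective h)
  · intro h; exact h1 (by rw [← h, neg_neg])

lemma coord_pmCubeStar {k : ℕ} {y : Fin k → ℝ} (h : y ∈ pmCubeStar k) (i : Fin k) :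
    y i = 1 ∨ y i = -1 := by
  simp only [pmCubeStar, pmCube, Finset.mem_sdiff, Finset.mem_image, Finset.mem_univ, true_and] at h
  obtain ⟨⟨f, rfl⟩, -⟩ := h
  by_cases hi : f i <;> simp [hi]

/-- Positive half of the cube. -/
def halfStar (k : ℕ) : Finset (Fin (k + 1) → ℝ) :=
  (pmCubeStar (k + 1)).filter (fun y => y 0 = 1)

/-- The representative of the antipodal class. -/
def rep {k : ℕ} (y : Fin (k + 1) → ℝ) : Fin (k + 1) → ℝ := if y 0 = 1 then y else -y

lemma rep_eq {k : ℕ} (y : Fin (k + 1) → ℝ) : rep y = y ∨ rep y = -y := by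
  unfold rep; split_ifs <;> simp

lemma rep_mem {k : ℕ} {y : Fin (k + 1) → ℝ} (h : y ∈ pmCubeStar (k + 1)) :
    rep y ∈ halfStar k := by
  unfold rep halfStar
  rw [Finset.mem_filter]
  split_ifs with h1
  · exact ⟨h, h1⟩
  · refine ⟨neg_mem_pmCubeStar h, ?_⟩
    rcases coord_pmCubeStar h 0 with h2 | h2
    · exact absurd h2 h1
    · simp [h2]

lemma eq_or_eq_neg_of_rep {k : ℕ} {y z : Fin (k + 1) → ℝ} (h : rep y = rep z) :
    y = z ∨ y = -z := by
  rcases rep_eq y with h1 | h1 <;> rcases rep_eq z with h2 | h2 <;> rw [h1, h2] at h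
  · exact Or.inl h
  · exact Or.inr h
  · exact Or.inr (by rw [← h, neg_neg])
  · exact Or.inl (neg_injective h)

lemma two_mul_card_halfStar (k : ℕ) : 2 * (halfStar k).card ≤ (pmCubeStar (k + 1)).card := by
  have hd : Disjoint (halfStar k) ((halfStar k).image (fun y => -y)) := by
    rw [Finset.disjoint_left]
    intro y hy hy'
    obtain ⟨z, hz, rfl⟩ := Finset.mem_image.1 hy'
    have h1 := (Finset.mem_filter.1 hy).2
    have h2 := (Finset.mem_filter.1 hz).2
    simp only [Pi.neg_apply] at h1
    linarith
  have hc : ((halfStar k).image (fun y => -y)).card = (halfStar k).card :=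
    Finset.card_image_of_injective _ neg_injective
  calc 2 * (halfStar k).card = (halfStar k ∪ (halfStar k).image (fun y => -y)).card := by
        rw [Finset.card_union_of_disjoint hd, hc]; ring
    _ ≤ _ := by
        refine Finset.card_le_card (Finset.union_subset (Finset.filter_subset _ _) ?_)
        intro y hy
        obtain ⟨z, hz, rfl⟩ := Finset.mem_image.1 hy
        exact neg_mem_pmCubeStar (Finset.mem_filter.1 hz).1

lemma card_good_le (k m : ℕ) :
    (((pmCubeStar (k + 1)).powersetCard m).filter (fun (Y : Finset (Fin (k + 1) → ℝ)) =>
      convexHull ℝ (Y : Set (Fin (k + 1) → ℝ)) ∩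
        segment ℝ (-(allOne (k + 1))) (allOne (k + 1)) = ∅)).card ≤
    (∑ i ∈ Finset.range (k + 1 + 1), m.choose i) * ((halfStar k).powersetCard m).card := by
  have anti : ∀ (Y : Finset (Fin (k + 1) → ℝ)), (∃ f : (Fin (k + 1) → ℝ) →ₗ[ℝ] ℝ,
      ∀ y ∈ Y, 0 < f y) → ∀ y ∈ Y, -y ∉ Y := by
    rintro Y ⟨f, hf⟩ y hy hy'
    have h1 := hf y hy
    have h2 := hf _ hy'
    rw [map_neg] at h2
    linarith
  refine Finset.card_le_mul_card_image_of_maps_to (f := fun Y => Y.image rep) ?_ _ ?_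
  · intro Y hY
    obtain ⟨hY, hg⟩ := Finset.mem_filter.1 hY
    have hg := exists_pos_of_disjoint Y hg
    obtain ⟨hsub, hcard⟩ := Finset.mem_powersetCard.1 hY
    rw [Finset.mem_powersetCard]
    refine ⟨?_, ?_⟩
    · intro s hs
      obtain ⟨y, hy, rfl⟩ := Finset.mem_image.1 hs
      exact rep_mem (hsub hy)
    · rw [Finset.card_image_of_injOn, hcard]
      intro y hy z hz hyz
      rcases eq_or_eq_neg_of_rep hyz with h | h
      · exact h
      · exact absurd (h ▸ hy) (anti Y hg z hz)
  · intro S hS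
    obtain ⟨hSsub, hScard⟩ := Finset.mem_powersetCard.1 hS
    refine le_trans ?_ (hScard ▸ card_cutFamily_le S)
    refine Finset.card_le_card_of_injOn
      (fun Y => Finset.univ.filter (fun s : ↥S => s.1 ∈ Y)) ?_ ?_
    · intro Y hY
      obtain ⟨hY, hYS⟩ := Finset.mem_filter.1 hY
      obtain ⟨hY, hg⟩ := Finset.mem_filter.1 hY
      obtain ⟨f, hf⟩ := exists_pos_of_disjoint Y hg
      refine Finset.mem_filter.2 ⟨Finset.mem_univ _, f, fun s => ⟨fun hs => ?_, fun hs => ?_⟩⟩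
      · exact hf _ (Finset.mem_filter.1 hs).2
      · have hs' : s.1 ∉ Y := by simpa using hs
        have : s.1 ∈ Y.image rep := by rw [hYS]; exact s.2
        obtain ⟨y, hy, hys⟩ := Finset.mem_image.1 this
        have h1 := hf y hy
        rcases rep_eq y with h | h
        · exact absurd (by rw [← hys, h]; exact hy) hs'
        · rw [← hys, h, map_neg]; linarith
    · have main : ∀ Y₁ Y₂ : Finset (Fin (k + 1) → ℝ), (∀ y ∈ Y₁, -y ∉ Y₁) →
          Y₁.image rep = S → Y₂.image rep = S → (∀ s ∈ S, s ∈ Y₁ ↔ s ∈ Y₂) → Y₁ ⊆ Y₂ := by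
        intro Y₁ Y₂ ha h1 h2 hs y hy
        have hm : rep y ∈ S := h1 ▸ Finset.mem_image_of_mem _ hy
        have hm2 := hm
        rw [← h2] at hm2
        obtain ⟨z, hz, hzy⟩ := Finset.mem_image.1 hm2
        rcases rep_eq y with h | h
        · rw [h] at hm
          exact (hs y hm).1 hy
        · rw [h] at hm
          have hn : -y ∉ Y₂ := fun hh => ha y hy ((hs _ hm).2 hh)
          rcases eq_or_eq_neg_of_rep hzy with h' | h'
          · exact h' ▸ hz
          · exact absurd (h' ▸ hz) hn
      intro Y₁ hY₁ Y₂ hY₂ hEq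
      obtain ⟨hY₁, hS₁⟩ := Finset.mem_filter.1 hY₁
      obtain ⟨hY₂, hS₂⟩ := Finset.mem_filter.1 hY₂
      have ha₁ := anti _ (exists_pos_of_disjoint Y₁ (Finset.mem_filter.1 hY₁).2)
      have ha₂ := anti _ (exists_pos_of_disjoint Y₂ (Finset.mem_filter.1 hY₂).2)
      have hs : ∀ s ∈ S, s ∈ Y₁ ↔ s ∈ Y₂ := by
        intro s hs
        have := Finset.ext_iff.1 hEq ⟨s, hs⟩
        simpa using this
      exact Finset.Subset.antisymm (main _ _ ha₁ hS₁ hS₂ hs)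
        (main _ _ ha₂ hS₂ hS₁ (fun s h => (hs s h).symm))

lemma tau_le (k m : ℕ) :
    tau (k + 1) m ≤ (∑ i ∈ Finset.range (k + 1 + 1), (m.choose i : ℝ)) / 2 ^ m := by
  have h1 := card_good_le k m
  have h2 : 2 ^ m * ((halfStar k).powersetCard m).card ≤
      ((pmCubeStar (k + 1)).powersetCard m).card := by
    rw [Finset.card_powersetCard, Finset.card_powersetCard]
    exact (two_pow_mul_choose_le _ _).trans (Nat.choose_le_choose _ (two_mul_card_halfStar k))
  unfold tau
  have h1' : ((((pmCubeStar (k + 1)).powersetCard m).filter (fun (Y : Finset (Fin (k + 1) → ℝ)) =>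
      convexHull ℝ (Y : Set (Fin (k + 1) → ℝ)) ∩
        segment ℝ (-(allOne (k + 1))) (allOne (k + 1)) = ∅)).card : ℝ) ≤
    (∑ i ∈ Finset.range (k + 1 + 1), (m.choose i : ℝ)) * ((halfStar k).powersetCard m).card := by
    exact_mod_cast h1
  have h2' : (2 : ℝ) ^ m * ((halfStar k).powersetCard m).card ≤
      ((pmCubeStar (k + 1)).powersetCard m).card := by exact_mod_cast h2
  have hB : 0 ≤ (∑ i ∈ Finset.range (k + 1 + 1), (m.choose i : ℝ)) :=
    Finset.sum_nonneg fun _ _ => Nat.cast_nonneg _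
  refine div_le_of_le_mul₀ (Nat.cast_nonneg _) (by positivity) ((le_trans ?_ h1').trans ?_)
  · rw [Nat.cast_le]
    refine le_trans (Finset.card_le_card (fun Z hZ => ?_)) (Finset.card_image_le
      (f := fun Y : Finset (Fin (k + 1) → ℝ) => (Y : Set (Fin (k + 1) → ℝ))))
    obtain ⟨hZ, hg⟩ := Finset.mem_filter.1 hZ
    simp only [Finset.bind_def, Finset.pure_def, Finset.mem_sup, Finset.mem_singleton] at hZ
    obtain ⟨Y, hY, rfl⟩ := hZ
    exact Finset.mem_image.2 ⟨Y, Finset.mem_filter.2 ⟨hY, hg⟩, rfl⟩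
  rw [div_mul_eq_mul_div, le_div_iff₀ (by positivity), mul_assoc]
  refine mul_le_mul_of_nonneg_left ?_ hB
  rw [mul_comm]; exact h2'

lemma sum_choose_le (k m : ℕ) (x : ℝ) (hx0 : 0 < x) (hx1 : x ≤ 1) :
    (∑ i ∈ Finset.range (k + 1), (m.choose i : ℝ)) * x ^ k ≤ (1 + x) ^ m := by
  have h : (1 + x) ^ m = ∑ i ∈ Finset.range (m + 1), (m.choose i : ℝ) * x ^ i := by
    rw [add_comm, add_pow]
    refine Finset.sum_congr rfl fun i _ => ?_
    simp [mul_comm]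
  have h' : ∑ i ∈ Finset.range (k + 1), (m.choose i : ℝ) * x ^ i ≤
      ∑ i ∈ Finset.range (m + 1), (m.choose i : ℝ) * x ^ i := by
    have e : ∑ i ∈ Finset.range (m + 1), (m.choose i : ℝ) * x ^ i =
        ∑ i ∈ Finset.range (m + 1 + k), (m.choose i : ℝ) * x ^ i := by
      refine Finset.sum_subset (Finset.range_mono (by omega)) fun i _ hi => ?_
      rw [Nat.choose_eq_zero_of_lt (by simpa using hi)]; simp
    rw [e]
    refine Finset.sum_le_sum_of_subset_of_nonneg (Finset.range_mono (by omega)) ?_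
    intros; positivity
  rw [h, Finset.sum_mul]
  refine le_trans (Finset.sum_le_sum fun i hi => ?_) h'
  refine mul_le_mul_of_nonneg_left ?_ (Nat.cast_nonneg _)
  exact pow_le_pow_of_le_one hx0.le hx1 (by have := Finset.mem_range.1 hi; omega)

lemma bound_exp (k m : ℕ) (u : ℝ) (hu : 0 < u) (hm : (2 + 4 * u) * k ≤ m) :
    (∑ i ∈ Finset.range (k + 1), (m.choose i : ℝ)) / 2 ^ m ≤
      Real.exp (-(u ^ 2 / (1 + u)) * k) := by
  have h1u : 0 < 1 + u := by linarith
  have h := sum_choose_le k m (1 / (1 + u)) (by positivity)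
    (by rw [div_le_one h1u]; linarith)
  set B := ∑ i ∈ Finset.range (k + 1), (m.choose i : ℝ)
  rw [div_pow, one_pow, mul_one_div, div_le_iff₀ (by positivity)] at h
  have hA : (1 + 1 / (1 + u)) / 2 ≤ Real.exp (-(u / (2 * (1 + u)))) := by
    have := Real.add_one_le_exp (-(u / (2 * (1 + u))))
    refine le_trans (le_of_eq ?_) this
    field_simp; ring
  have hA' : ((1 + 1 / (1 + u)) / 2) ^ m ≤ Real.exp (-(u / (2 * (1 + u))) * m) := by
    rw [mul_comm, Real.exp_nat_mul]
    exact pow_le_pow_left₀ (by positivity) hA m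
  have hC : (1 + u) ^ k ≤ Real.exp (u * k) := by
    rw [mul_comm, Real.exp_nat_mul]
    exact pow_le_pow_left₀ h1u.le (by linarith [Real.add_one_le_exp u]) k
  calc B / 2 ^ m ≤ (1 + 1 / (1 + u)) ^ m * (1 + u) ^ k / 2 ^ m := by gcongr
    _ = ((1 + 1 / (1 + u)) / 2) ^ m * (1 + u) ^ k := by rw [div_pow]; ring
    _ ≤ Real.exp (-(u / (2 * (1 + u))) * m) * Real.exp (u * k) := by gcongr
    _ = Real.exp (-(u / (2 * (1 + u))) * m + u * k) := (Real.exp_add _ _).symm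
    _ ≤ _ := by
      rw [Real.exp_le_exp]
      have h3 := mul_le_mul_of_nonneg_left hm (show 0 ≤ u / (2 * (1 + u)) by positivity)
      have h4 : u / (2 * (1 + u)) * ((2 + 4 * u) * k) = u * k + u ^ 2 / (1 + u) * k := by
        field_simp; ring
      linarith

-- STATEMENT 15
theorem statement15 (ε : ℝ) (hε : 0 < ε) :
    Tendsto (fun k => tau k ⌈(2 + ε) * (k : ℝ)⌉₊) atTop (nhds 0) := by
  have hu : 0 < ε / 4 := by positivity
  have hlim : Tendsto (fun k : ℕ => Real.exp (-((ε / 4) ^ 2 / (1 + ε / 4)) * (k : ℝ))) atTop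
      (nhds 0) := by
    refine Real.tendsto_exp_atBot.comp ?_
    refine Tendsto.const_mul_atTop_of_neg ?_ tendsto_natCast_atTop_atTop
    have : 0 < (ε / 4) ^ 2 / (1 + ε / 4) := by positivity
    linarith
  refine tendsto_of_tendsto_of_tendsto_of_le_of_le' tendsto_const_nhds hlim ?_ ?_
  · exact Eventually.of_forall fun k => by unfold tau; positivity
  · filter_upwards [eventually_ge_atTop 1] with k hk
    obtain ⟨k, rfl⟩ : ∃ j, k = j + 1 := ⟨k - 1, by omega⟩
    refine (tau_le k _).trans (bound_exp (k + 1) _ (ε / 4) hu ?_)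
    refine le_trans (le_of_eq ?_) (Nat.le_ceil _)
    ring

end
end

section
/- For every ε > 0: lim_{k→∞} τ(k, ⌊(2−ε)k⌋) = 1. -/
open Finset Filter MeasureTheory

open scoped Classical

noncomputable section

/-- The real sign vector of a Boolean vector. -/
def s16vec {k : ℕ} (b : Fin k → Bool) : Fin k → ℝ := fun i => if b i then 1 else -1

/-- `y` lies strictly on one side of a hyperplane containing `U`. -/
def S16Good {k m : ℕ} (y : Fin m → Fin k → Bool) (U : Submodule ℝ (Fin k → ℝ)) : Prop :=
  ∃ f : (Fin k → ℝ) →ₗ[ℝ] ℝ, (∀ u ∈ U, f u = 0) ∧ ∀ i, 0 < f (s16vec (y i))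

/-- number of bad sequences -/
def s16Bad (k m : ℕ) (U : Submodule ℝ (Fin k → ℝ)) : ℕ :=
  (Finset.univ.filter (fun y : Fin m → Fin k → Bool => ¬ S16Good y U)).card

lemma s16vec_inj {k : ℕ} : Function.Injective (s16vec (k := k)) := by
  intro a b h
  funext i
  have := congrFun h i
  simp only [s16vec] at this
  cases ha : a i <;> cases hb : b i <;> simp [ha, hb] at this ⊢ <;> norm_num at this

lemma s16vec_not {k : ℕ} (b : Fin k → Bool) : s16vec (fun i => !(b i)) = - s16vec b := by
  funext i
  simp only [s16vec, Pi.neg_apply]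
  by_cases h : b i = true <;> simp [h]

lemma s16_odlyzko {k : ℕ} (U : Submodule ℝ (Fin k → ℝ)) :
    (Finset.univ.filter (fun b : Fin k → Bool => s16vec b ∈ U)).card
      ≤ 2 ^ Module.finrank ℝ U := by
  obtain ⟨κ, a, ha, hspan, hli⟩ := exists_linearIndependent' ℝ
    (fun i : Fin k => ((LinearMap.proj i : (Fin k → ℝ) →ₗ[ℝ] ℝ).comp U.subtype : U →ₗ[ℝ] ℝ))
  have : Fintype κ := Fintype.ofInjective a ha
  have hc : Fintype.card κ ≤ Module.finrank ℝ U := by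
    have h1 := hli.fintype_card_le_finrank
    have h2 : Module.finrank ℝ (U →ₗ[ℝ] ℝ) = Module.finrank ℝ U := Subspace.dual_finrank_eq
    omega
  calc _ ≤ (Finset.univ : Finset (κ → Bool)).card := by
        apply Finset.card_le_card_of_injOn (fun b j => b (a j)) (fun _ _ => by simp)
        intro b hb b' hb' h
        simp only [Finset.coe_filter, Finset.mem_univ, true_and, Set.mem_ofPred_eq] at hb hb'
        apply s16vec_inj
        let u : U := ⟨s16vec b, hb⟩ - ⟨s16vec b', hb'⟩
        have key : Submodule.span ℝ (Set.range
            (fun i : Fin k => ((LinearMap.proj i : (Fin k → ℝ) →ₗ[ℝ] ℝ).comp U.subtype :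
              U →ₗ[ℝ] ℝ))) ≤ LinearMap.ker (LinearMap.applyₗ (R := ℝ) (M₂ := ℝ) u) := by
          rw [← hspan, Submodule.span_le]
          rintro _ ⟨j, rfl⟩
          have := congrFun h j
          simp only at this
          simp [u, s16vec, this]
        funext i
        have := key (Submodule.subset_span ⟨i, rfl⟩)
        simp [u] at this
        linarith
    _ = 2 ^ Fintype.card κ := by simp
    _ ≤ _ := Nat.pow_le_pow_right (by norm_num) hc

lemma s16_good_mono {k m : ℕ} {y : Fin m → Fin k → Bool} {U V : Submodule ℝ (Fin k → ℝ)}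
    (h : U ≤ V) (hg : S16Good y V) : S16Good y U := by
  obtain ⟨f, h1, h2⟩ := hg
  exact ⟨f, fun u hu => h1 u (h hu), h2⟩

/-- perturbation -/
lemma s16_perturb {k m : ℕ} {y : Fin m → Fin k → Bool} {U : Submodule ℝ (Fin k → ℝ)}
    {f g : (Fin k → ℝ) →ₗ[ℝ] ℝ} (hf : ∀ u ∈ U, f u = 0) (hy : ∀ i, 0 < f (s16vec (y i)))
    (hg : ∀ u ∈ U, g u = 0) (b : Fin k → Bool) (hfb : f (s16vec b) = 0)
    (hgb : 0 < g (s16vec b)) : S16Good (Fin.cons b y : Fin (m+1) → Fin k → Bool) U := by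
  have : ∃ t : ℝ, 0 < t ∧ ∀ i, 0 < f (s16vec (y i)) + t * g (s16vec (y i)) := by
    have h : ∀ᶠ t : ℝ in nhdsWithin 0 (Set.Ioi 0), ∀ i,
        0 < f (s16vec (y i)) + t * g (s16vec (y i)) := by
      rw [Filter.eventually_all]
      intro i
      apply Filter.Eventually.filter_mono nhdsWithin_le_nhds
      have hc : Continuous (fun t : ℝ => f (s16vec (y i)) + t * g (s16vec (y i))) := by fun_prop
      have := hc.tendsto 0
      simp only [zero_mul, add_zero] at this
      exact this.eventually (lt_mem_nhds (hy i))
    obtain ⟨t, ht1, ht2⟩ := (h.and self_mem_nhdsWithin).exists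
    exact ⟨t, ht2, ht1⟩
  obtain ⟨t, ht, h⟩ := this
  refine ⟨f + t • g, fun u hu => by simp [hf u hu, hg u hu], fun i => ?_⟩
  refine Fin.cases ?_ (fun j => ?_) i
  · simp [hfb, mul_pos ht hgb]
  · simpa using h j

lemma s16_sep {k : ℕ} {U : Submodule ℝ (Fin k → ℝ)} {x : Fin k → ℝ} (hx : x ∉ U) :
    ∃ g : (Fin k → ℝ) →ₗ[ℝ] ℝ, (∀ u ∈ U, g u = 0) ∧ 0 < g x := by
  obtain ⟨g, hg, hU⟩ := Submodule.exists_le_ker_of_notMem hx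
  rcases lt_or_gt_of_ne hg with h | h
  · exact ⟨-g, fun u hu => by simpa using hU hu, by simpa using h⟩
  · exact ⟨g, fun u hu => by simpa using hU hu, h⟩

lemma s16_pointwise {k m : ℕ} (y : Fin m → Fin k → Bool) (U : Submodule ℝ (Fin k → ℝ))
    (b : Fin k → Bool) (hb : s16vec b ∉ U) :
    (if ¬ S16Good (Fin.cons b y : Fin (m+1) → Fin k → Bool) U then 1 else 0) +
    (if ¬ S16Good (Fin.cons (fun i => !(b i)) y : Fin (m+1) → Fin k → Bool) U then 1 else 0)
    ≤ (if ¬ S16Good y U then 1 else 0) +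
      (if ¬ S16Good y (U ⊔ Submodule.span ℝ {s16vec b}) then 1 else 0) := by
  have hconsneg : ∀ f : (Fin k → ℝ) →ₗ[ℝ] ℝ, (∀ u ∈ U, f u = 0) →
      (∀ i, 0 < f (s16vec (y i))) → ∀ c : Fin k → Bool, 0 < f (s16vec c) →
      S16Good (Fin.cons c y : Fin (m+1) → Fin k → Bool) U := by
    intro f h1 h2 c hc
    refine ⟨f, h1, fun i => Fin.cases ?_ (fun j => ?_) i⟩
    · simpa using hc
    · simpa using h2 j
  by_cases h1 : S16Good y (U ⊔ Submodule.span ℝ {s16vec b})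
  · obtain ⟨f, hf, hy⟩ := h1
    have hfU : ∀ u ∈ U, f u = 0 := fun u hu => hf u (Submodule.mem_sup_left hu)
    have hfb : f (s16vec b) = 0 :=
      hf _ (Submodule.mem_sup_right (Submodule.mem_span_singleton_self _))
    obtain ⟨g, hg, hgb⟩ := s16_sep hb
    have a1 := s16_perturb hfU hy hg b hfb hgb
    have a2 := s16_perturb (g := -g) hfU hy (fun u hu => by simp [hg u hu]) (fun i => !(b i))
      (by rw [s16vec_not]; simp [hfb]) (by rw [s16vec_not]; simpa using hgb)
    simp [a1, a2]
  · by_cases h2 : S16Good y U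
    · obtain ⟨f, hf, hy⟩ := h2
      have hfb : f (s16vec b) ≠ 0 := by
        intro h0
        apply h1
        refine ⟨f, fun u hu => ?_, hy⟩
        have : U ⊔ Submodule.span ℝ {s16vec b} ≤ LinearMap.ker f := by
          refine sup_le (fun u hu => by simpa using hf u hu) ?_
          rw [Submodule.span_le]
          simpa using h0
        simpa using this hu
      rcases lt_or_gt_of_ne hfb with h | h
      · have := hconsneg f hf hy (fun i => !(b i)) (by rw [s16vec_not]; simpa using h)
        have hU : S16Good y U := ⟨f, hf, hy⟩
        rw [if_neg (not_not.2 this), if_pos h1, if_neg (not_not.2 hU)]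
        split_ifs <;> omega
      · have := hconsneg f hf hy b h
        have hU : S16Good y U := ⟨f, hf, hy⟩
        rw [if_neg (not_not.2 this), if_pos h1, if_neg (not_not.2 hU)]
        split_ifs <;> omega
    · rw [if_pos h1, if_pos h2]
      split_ifs <;> omega

/-- slice count -/
def s16Slice (k m : ℕ) (U : Submodule ℝ (Fin k → ℝ)) (b : Fin k → Bool) : ℕ :=
  ∑ y : Fin m → Fin k → Bool,
    (if ¬ S16Good (Fin.cons b y : Fin (m+1) → Fin k → Bool) U then 1 else 0)

lemma s16Bad_succ (k m : ℕ) (U : Submodule ℝ (Fin k → ℝ)) :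
    s16Bad k (m+1) U = ∑ b, s16Slice k m U b := by
  unfold s16Bad s16Slice
  rw [Finset.card_filter, ← (Fin.consEquiv (fun _ : Fin (m+1) => Fin k → Bool)).sum_comp,
    Fintype.sum_prod_type]
  rfl

lemma s16Slice_le (k m : ℕ) (U : Submodule ℝ (Fin k → ℝ)) (b : Fin k → Bool)  :
    s16Slice k m U b ≤ (2 ^ k) ^ m := by
  unfold s16Slice
  rw [← Finset.card_filter]
  refine (Finset.card_le_univ _).trans ?_
  simp

lemma s16Bad_le (k m : ℕ) (U : Submodule ℝ (Fin k → ℝ)) : s16Bad k m U ≤ (2 ^ k) ^ m := by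
  unfold s16Bad
  refine (Finset.card_le_univ _).trans ?_
  simp

lemma s16_two_mul (k m : ℕ) (U : Submodule ℝ (Fin k → ℝ)) :
    2 * s16Bad k (m+1) U = ∑ b, (s16Slice k m U b + s16Slice k m U (fun i => !(b i))) := by
  rw [Finset.sum_add_distrib, two_mul, s16Bad_succ]
  congr 1
  have hinv : Function.Involutive (fun (b : Fin k → Bool) i => !(b i)) := by
    intro b; funext i; simp
  exact (Equiv.sum_comp hinv.toPerm (s16Slice k m U)).symm

lemma s16_slice_pair (k m : ℕ) (U : Submodule ℝ (Fin k → ℝ)) (b : Fin k → Bool)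
    (hb : s16vec b ∉ U) :
    s16Slice k m U b + s16Slice k m U (fun i => !(b i)) ≤
      s16Bad k m U + s16Bad k m (U ⊔ Submodule.span ℝ {s16vec b}) := by
  unfold s16Slice s16Bad
  rw [Finset.card_filter, Finset.card_filter, ← Finset.sum_add_distrib, ← Finset.sum_add_distrib]
  exact Finset.sum_le_sum fun y _ => s16_pointwise y U b hb

lemma s16_recursion (k m : ℕ) (U : Submodule ℝ (Fin k → ℝ)) (B : ℝ) (hB : 0 ≤ B)
    (h : ∀ b, s16vec b ∉ U → (s16Bad k m U : ℝ) +
      s16Bad k m (U ⊔ Submodule.span ℝ {s16vec b}) ≤ B) :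
    2 * (s16Bad k (m+1) U : ℝ) ≤
      2 * 2 ^ Module.finrank ℝ U * (2 ^ k) ^ m + 2 ^ k * B := by
  have h0 : 2 * (s16Bad k (m+1) U : ℝ) =
      ∑ b, ((s16Slice k m U b : ℝ) + s16Slice k m U (fun i => !(b i))) := by
    exact_mod_cast s16_two_mul k m U
  rw [h0]
  have h1 : ∀ b : Fin k → Bool, ((s16Slice k m U b : ℝ) + s16Slice k m U (fun i => !(b i))) ≤
      (if s16vec b ∈ U then 2 * ((2:ℝ) ^ k) ^ m else 0) + B := by
    intro b
    split_ifs with hb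
    · have a1 : (s16Slice k m U b : ℝ) ≤ (2 ^ k) ^ m := by exact_mod_cast s16Slice_le k m U b
      have a2 : (s16Slice k m U (fun i => !(b i)) : ℝ) ≤ (2 ^ k) ^ m := by
        exact_mod_cast s16Slice_le k m U _
      linarith
    · have a1 : (s16Slice k m U b : ℝ) + s16Slice k m U (fun i => !(b i)) ≤
        s16Bad k m U + s16Bad k m (U ⊔ Submodule.span ℝ {s16vec b}) := by
        exact_mod_cast s16_slice_pair k m U b hb
      linarith [h b hb]
  refine (Finset.sum_le_sum fun b _ => h1 b).trans ?_
  rw [Finset.sum_add_distrib, ← Finset.sum_filter, Finset.sum_const, Finset.sum_const]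
  have h2 : ((Finset.univ.filter (fun b : Fin k → Bool => s16vec b ∈ U)).card : ℝ)
      ≤ 2 ^ Module.finrank ℝ U := by exact_mod_cast s16_odlyzko U
  simp only [nsmul_eq_mul, Finset.card_univ, Fintype.card_pi, Fintype.card_bool,
    Finset.prod_const, Fintype.card_fin]
  push_cast
  have h3 : (0:ℝ) ≤ 2 * (2 ^ k) ^ m := by positivity
  nlinarith [mul_le_mul_of_nonneg_right h2 h3]

lemma s16_exp_half : Real.exp (1/2) ≤ 2 := by
  have h := Real.exp_one_lt_d9
  have h2 : Real.exp (1/2) * Real.exp (1/2) = Real.exp 1 := by rw [← Real.exp_add]; norm_num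
  by_contra hc
  push Not at hc
  nlinarith

lemma s16_pow_le (d k : ℕ) (hdk : d ≤ k) :
    (2:ℝ) ^ d ≤ 2 ^ k * Real.exp (((d:ℝ) - k) / 2) := by
  obtain ⟨e, rfl⟩ := Nat.exists_eq_add_of_le hdk
  have h1 : Real.exp ((((d:ℕ):ℝ) - ((d + e : ℕ) : ℝ)) / 2) = (Real.exp (1/2) ^ e)⁻¹ := by
    rw [← Real.exp_nat_mul, ← Real.exp_neg]
    congr 1
    push_cast
    ring
  rw [h1, pow_add, mul_assoc]
  have h2 : Real.exp (1/2) ^ e ≤ 2 ^ e := pow_le_pow_left₀ (Real.exp_pos _).le s16_exp_half e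
  have h3 : 0 < Real.exp (1/2) ^ e := by positivity
  have h4 : 1 ≤ 2 ^ e * (Real.exp (1/2) ^ e)⁻¹ := by
    rw [← div_eq_mul_inv, one_le_div h3]; exact h2
  have h5 : (0:ℝ) < 2 ^ d := by positivity
  nlinarith

lemma s16_step (a : ℝ) : (1 + Real.exp a) / 2 ≤ Real.exp (a/2 + a^2/8) := by
  have h := Real.cosh_le_exp_half_sq (a/2)
  rw [Real.cosh_eq] at h
  have h1 : Real.exp (a/2 + a^2/8) = Real.exp (a/2) * Real.exp ((a/2)^2/2) := by
    rw [← Real.exp_add]; ring_nf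
  rw [h1]
  refine le_trans (le_of_eq ?_) (mul_le_mul_of_nonneg_left h (Real.exp_pos _).le)
  have e1 : Real.exp (a/2) * Real.exp (a/2) = Real.exp a := by rw [← Real.exp_add]; ring_nf
  have e2 : Real.exp (a/2) * Real.exp (-(a/2)) = 1 := by rw [← Real.exp_add]; simp
  linear_combination (-1/2) * e1 - (1/2) * e2

lemma s16_main (k : ℕ) (a D : ℝ) (ha : 0 ≤ a) (hDk : D ≤ k) (m : ℕ) :
    ∀ U : Submodule ℝ (Fin k → ℝ), (s16Bad k m U : ℝ) ≤ (2 ^ k) ^ m *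
      (Real.exp (a * (Module.finrank ℝ U - D) + m * (a/2 + a^2/8)) +
        m * Real.exp ((D - k)/2)) := by
  induction m with
  | zero =>
    intro U
    have : s16Bad k 0 U = 0 := by
      unfold s16Bad
      rw [Finset.card_eq_zero, Finset.filter_eq_empty_iff]
      intro y _
      simp only [not_not]
      exact ⟨0, by simp, fun i => i.elim0⟩
    rw [this]
    push_cast
    positivity
  | succ m ih =>
    intro U
    set d := Module.finrank ℝ U with hd
    set E := Real.exp ((D - k)/2) with hE
    have hE0 : 0 < E := Real.exp_pos _
    by_cases hdD : D ≤ d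
    · have h1 : (s16Bad k (m+1) U : ℝ) ≤ (2 ^ k) ^ (m+1) := by exact_mod_cast s16Bad_le k (m+1) U
      refine h1.trans (le_mul_of_one_le_right (by positivity) ?_)
      have : (1:ℝ) ≤ Real.exp (a * (d - D) + ((m+1 : ℕ):ℝ) * (a/2 + a^2/8)) := by
        apply Real.one_le_exp
        have := mul_nonneg ha (sub_nonneg.2 hdD)
        positivity
      have : 0 ≤ ((m+1 : ℕ):ℝ) * E := by positivity
      linarith
    · push Not at hdD
      set X := Real.exp (a * (d - D) + m * (a/2 + a^2/8)) with hX
      have hX0 : 0 < X := Real.exp_pos _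
      have hrec := s16_recursion k m U ((2 ^ k) ^ m * ((X + m * E) + (Real.exp a * X + m * E)))
        (by positivity) (by
          intro b hb
          have i1 := ih U
          have i2 := ih (U ⊔ Submodule.span ℝ {s16vec b})
          have hfr : (Module.finrank ℝ ↥(U ⊔ Submodule.span ℝ {s16vec b}) : ℝ) ≤ d + 1 := by
            have q1 := Submodule.finrank_add_le_finrank_add_finrank U
              (Submodule.span ℝ {s16vec b})
            have q2 := finrank_span_le_card (R := ℝ) ({s16vec b} : Set (Fin k → ℝ))
            simp at q2
            have : Module.finrank ℝ ↥(U ⊔ Submodule.span ℝ {s16vec b}) ≤ d + 1 := by omega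
            exact_mod_cast this
          have i3 : Real.exp (a * (Module.finrank ℝ ↥(U ⊔ Submodule.span ℝ {s16vec b}) - D) +
              m * (a/2 + a^2/8)) ≤ Real.exp a * X := by
            rw [hX, ← Real.exp_add]
            apply Real.exp_le_exp.2
            nlinarith [mul_le_mul_of_nonneg_left hfr ha]
          have i4 := mul_le_mul_of_nonneg_left (add_le_add_left i3 (m * E))
            (show (0:ℝ) ≤ (2 ^ k) ^ m by positivity)
          rw [mul_add]
          linarith)
      have hdk : d ≤ k := by
        have : (d:ℝ) ≤ k := by linarith
        exact_mod_cast this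
      have hp : (2:ℝ) ^ d ≤ 2 ^ k * E := by
        refine (s16_pow_le d k hdk).trans ?_
        apply mul_le_mul_of_nonneg_left _ (by positivity)
        apply Real.exp_le_exp.2
        linarith
      have hs : (1 + Real.exp a) / 2 * X ≤
          Real.exp (a * (d - D) + ((m+1 : ℕ):ℝ) * (a/2 + a^2/8)) := by
        refine (mul_le_mul_of_nonneg_right (s16_step a) hX0.le).trans (le_of_eq ?_)
        rw [hX, ← Real.exp_add]
        congr 1
        push_cast
        ring
      have hP : (0:ℝ) < (2 ^ k) ^ m := by positivity
      have hQ : (0:ℝ) < 2 ^ k := by positivity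
      have r1 : 2 * 2 ^ d * ((2:ℝ) ^ k) ^ m ≤ 2 * (2 ^ k * E) * (2 ^ k) ^ m := by gcongr
      have r2 : ((2:ℝ) ^ k) ^ (m+1) * ((1 + Real.exp a) / 2 * X + ((m+1 : ℕ):ℝ) * E) ≤
        (2 ^ k) ^ (m+1) * (Real.exp (a * (d - D) + ((m+1 : ℕ):ℝ) * (a/2 + a^2/8)) +
          ((m+1 : ℕ):ℝ) * E) := by gcongr
      refine le_trans ?_ r2
      have : 2 * (s16Bad k (m+1) U : ℝ) ≤ 2 * (2 ^ k * E) * (2 ^ k) ^ m +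
        2 ^ k * ((2 ^ k) ^ m * ((X + m * E) + (Real.exp a * X + m * E))) := by linarith
      rw [pow_succ]
      push_cast
      linarith

lemma s16_good_disjoint {k m : ℕ} (y : Fin m → Fin k → Bool)
    (h : S16Good y (Submodule.span ℝ {allOne k})) :
    convexHull ℝ (Set.range fun i => s16vec (y i)) ∩ segment ℝ (-(allOne k)) (allOne k) = ∅ := by
  obtain ⟨f, hf, hy⟩ := h
  rw [Set.eq_empty_iff_forall_notMem]
  rintro x ⟨hx, hs⟩
  have h1 : convexHull ℝ (Set.range fun i => s16vec (y i)) ⊆ {x | 0 < f x} := by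
    apply convexHull_min
    · rintro _ ⟨i, rfl⟩; exact hy i
    · exact convex_halfSpace_gt f.isLinear 0
  have h2 : 0 < f x := h1 hx
  obtain ⟨p, q, -, -, -, rfl⟩ := hs
  have : f (allOne k) = 0 := hf _ (Submodule.mem_span_singleton_self _)
  simp [this] at h2

/-- bad subsets -/
def s16BadSets (k m : ℕ) : Finset (Finset (Fin k → ℝ)) :=
  ((pmCubeStar k).powersetCard m).filter (fun Y =>
      ¬ convexHull ℝ (Y : Set (Fin k → ℝ)) ∩ segment ℝ (-(allOne k)) (allOne k) = ∅)

lemma s16_transfer (k m : ℕ) :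
    (s16BadSets k m).card * m.factorial ≤ s16Bad k m (Submodule.span ℝ {allOne k}) := by
  unfold s16Bad
  set T := Finset.univ.filter (fun y : Fin m → Fin k → Bool =>
    ¬ S16Good y (Submodule.span ℝ {allOne k})) with hT
  have h : ∀ Y ∈ s16BadSets k m, m.factorial ≤
      (T.filter (fun y => Finset.univ.image (fun i => s16vec (y i)) = Y)).card := by
    intro Y hY
    simp only [s16BadSets, Finset.mem_filter, Finset.mem_powersetCard] at hY
    obtain ⟨⟨hsub, hcard⟩, hbad⟩ := hY
    have e : Fin m ≃ Y := (Finset.equivFinOfCardEq hcard).symm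
    have hex : ∀ x : Y, ∃ b : Fin k → Bool, s16vec b = x := by
      intro x
      have := hsub x.2
      simp only [pmCubeStar, pmCube, Finset.mem_sdiff, Finset.mem_image] at this
      obtain ⟨⟨b, -, hb⟩, -⟩ := this
      exact ⟨b, hb⟩
    choose c hc using hex
    have hcinj : Function.Injective c := fun x x' hx => by
      apply Subtype.ext; rw [← hc x, ← hc x', hx]
    have : (Finset.univ : Finset (Equiv.Perm (Fin m))).card = m.factorial := by
      simp [Fintype.card_perm]
    rw [← this]
    apply Finset.card_le_card_of_injOn (fun π i => c (e (π i)))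
    · intro π _
      have him : Finset.univ.image (fun i => s16vec (c (e (π i)))) = Y := by
        ext x
        simp only [Finset.mem_image, Finset.mem_univ, true_and, hc]
        constructor
        · rintro ⟨i, rfl⟩; exact (e (π i)).2
        · intro hx
          exact ⟨π.symm (e.symm ⟨x, hx⟩), by simp⟩
      simp only [Finset.coe_filter, Set.mem_ofPred_eq, hT, Finset.mem_filter, Finset.mem_univ,
        true_and]
      refine ⟨fun hg => hbad ?_, him⟩
      have := s16_good_disjoint _ hg
      rw [← him]
      simpa using this
    · intro π _ π' _ hpp
      ext i
      have := e.injective (hcinj (congrFun hpp i))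
      rw [this]
  have := Finset.card_nsmul_le_sum (s16BadSets k m) _ _ h
  rw [smul_eq_mul] at this
  refine this.trans ?_
  rw [← Finset.card_biUnion]
  · apply Finset.card_le_card
    intro y hy
    simp only [Finset.mem_biUnion, Finset.mem_filter] at hy
    obtain ⟨_, _, hy, _⟩ := hy
    exact hy
  · intro Y _ Y' _ hne
    rw [Function.onFun, Finset.disjoint_left]
    intro y hy hy'
    simp only [Finset.mem_filter] at hy hy'
    exact hne (hy.2.symm.trans hy'.2)

lemma s16_card_star (k : ℕ) : 2 ^ k - 2 ≤ (pmCubeStar k).card := by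
  unfold pmCubeStar
  have h1 : (pmCube k).card = 2 ^ k := by
    unfold pmCube
    refine (Finset.card_image_of_injective _ (s16vec_inj (k := k))).trans ?_
    simp
  have h2 := Finset.le_card_sdiff ({-(allOne k), allOne k} : Finset (Fin k → ℝ)) (pmCube k)
  have h3 : ({-(allOne k), allOne k} : Finset (Fin k → ℝ)).card ≤ 2 := Finset.card_le_two
  omega

/-- The set-valued filter used in `tau` has the same cardinality as the finset-valued one. -/
lemma s16_tau_eq (k m : ℕ) : tau k m =
    ((((pmCubeStar k).powersetCard m).filter (fun Y : Finset (Fin k → ℝ) =>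
      convexHull ℝ (Y : Set (Fin k → ℝ)) ∩ segment ℝ (-(allOne k)) (allOne k) = ∅)).card : ℝ) /
    ((((pmCubeStar k).powersetCard m)).card : ℝ) := by
  unfold tau
  congr 2
  symm
  apply Finset.card_bij (fun (Y : Finset (Fin k → ℝ)) _ => (Y : Set (Fin k → ℝ)))
  · intro Y hY
    simpa [Finset.bind_def, Finset.pure_def, Finset.mem_sup] using hY
  · intro Y _ Y' _ h
    exact_mod_cast h
  · intro Z hZ
    simp only [Finset.bind_def, Finset.pure_def, Finset.mem_filter, Finset.mem_sup,
      Finset.mem_singleton] at hZ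
    obtain ⟨⟨Y, hY, rfl⟩, h⟩ := hZ
    exact ⟨Y, Finset.mem_filter.2 ⟨hY, h⟩, rfl⟩

lemma s16_tau (k m : ℕ) (hm : 2 * (m * (m + 1)) ≤ 2 ^ k) :
    |tau k m - 1| ≤ 2 * (s16Bad k m (Submodule.span ℝ {allOne k}) / (2 ^ k) ^ m) := by
  set S := (pmCubeStar k).powersetCard m with hS
  have hsum := Finset.card_filter_add_card_filter_not (s := S) (fun Y =>
      convexHull ℝ (Y : Set (Fin k → ℝ)) ∩ segment ℝ (-(allOne k)) (allOne k) = ∅)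
  have hpow : (2 ^ k - 1 - m) ^ m ≤ S.card * m.factorial := by
    rw [hS, Finset.card_powersetCard, mul_comm, ← Nat.descFactorial_eq_factorial_mul_choose]
    refine le_trans (Nat.pow_le_pow_left ?_ m) (Nat.pow_sub_le_descFactorial _ _)
    have := s16_card_star k
    omega
  have hpow2 : ((2:ℝ) ^ k) ^ m / 2 ≤ S.card * m.factorial := by
    refine le_trans ?_ (show (((2 ^ k - 1 - m) ^ m : ℕ) : ℝ) ≤ _ by exact_mod_cast hpow)
    rcases Nat.eq_zero_or_pos m with rfl | hm0
    · norm_num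
    have hle : m + 1 ≤ 2 ^ k := by nlinarith
    have hcast : ((2 ^ k - 1 - m : ℕ) : ℝ) = 2 ^ k - (m + 1) := by
      rw [Nat.sub_sub, Nat.cast_sub (by omega)]; push_cast; ring
    push_cast [hcast]
    have hN : (0:ℝ) < 2 ^ k := by positivity
    have hle' : (m:ℝ) + 1 ≤ 2 ^ k := by exact_mod_cast hle
    have hb := one_add_mul_le_pow (a := -((m + 1 : ℝ) / 2 ^ k)) (by
      have : (m + 1 : ℝ) / 2 ^ k ≤ 1 := (div_le_one hN).2 hle'
      linarith) m
    have hm' : 2 * ((m:ℝ) * (m + 1)) ≤ 2 ^ k := by exact_mod_cast hm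
    have hq : (m:ℝ) * ((m + 1 : ℝ) / 2 ^ k) ≤ 1 / 2 := by
      rw [← mul_div_assoc, div_le_div_iff₀ hN (by norm_num)]; linarith
    have hx : (2:ℝ) ^ k - (m + 1) = 2 ^ k * (1 + -((m + 1 : ℝ) / 2 ^ k)) := by
      field_simp
      ring
    rw [hx, mul_pow, div_eq_mul_inv]
    apply mul_le_mul_of_nonneg_left _ (by positivity)
    refine le_trans ?_ hb
    rw [mul_neg]
    linarith
  have hf : (0:ℝ) < m.factorial := by exact_mod_cast m.factorial_pos
  have hP : (0:ℝ) < (2 ^ k) ^ m := by positivity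
  have hSpos : (0:ℝ) < S.card := by
    by_contra hc
    push Not at hc
    nlinarith
  have htr : ((s16BadSets k m).card : ℝ) * m.factorial ≤
      s16Bad k m (Submodule.span ℝ {allOne k}) := by exact_mod_cast s16_transfer k m
  have hsum' : ((S.filter (fun Y : Finset (Fin k → ℝ) =>
      convexHull ℝ (Y : Set (Fin k → ℝ)) ∩ segment ℝ (-(allOne k)) (allOne k) = ∅)).card : ℝ)
      + (s16BadSets k m).card = S.card := by
    unfold s16BadSets
    exact_mod_cast hsum
  have htau : tau k m - 1 = - ((s16BadSets k m).card / S.card) := by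
    rw [s16_tau_eq, ← hS, ← hsum']
    rw [← hsum'] at hSpos
    field_simp
    ring
  rw [htau, abs_neg, abs_of_nonneg (by positivity)]
  set B : ℝ := (s16Bad k m (Submodule.span ℝ {allOne k}) : ℝ)
  have hB : 0 ≤ B := by positivity
  calc ((s16BadSets k m).card : ℝ) / S.card
      = ((s16BadSets k m).card * m.factorial) / (S.card * m.factorial) := by field_simp
    _ ≤ B / ((2 ^ k) ^ m / 2) := by gcongr
    _ = _ := by field_simp

-- STATEMENT 16
theorem statement16 (ε : ℝ) (hε : 0 < ε) :
    Tendsto (fun k => tau k ⌊(2 - ε) * (k : ℝ)⌋₊) atTop (nhds 1) := by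
  rw [tendsto_iff_dist_tendsto_zero]
  simp only [Real.dist_eq]
  have hlim : Tendsto (fun k : ℕ => 2 * (Real.exp (ε/2 - k * (ε^2/16)) +
      2 * (k * Real.exp (-(ε/8) * k)))) atTop (nhds 0) := by
    have l1 : Tendsto (fun k : ℕ => Real.exp (ε/2 - k * (ε^2/16))) atTop (nhds 0) := by
      apply Real.tendsto_exp_atBot.comp
      apply tendsto_atBot_add_const_left
      apply tendsto_neg_atTop_atBot.comp
      exact tendsto_natCast_atTop_atTop.atTop_mul_const (by positivity)
    have l2 : Tendsto (fun k : ℕ => (k:ℝ) * Real.exp (-(ε/8) * k)) atTop (nhds 0) := by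
      have := (tendsto_rpow_mul_exp_neg_mul_atTop_nhds_zero 1 (ε/8) (by positivity)).comp
        tendsto_natCast_atTop_atTop
      simpa [Function.comp_def] using this
    simpa using (l1.add (l2.const_mul 2)).const_mul 2
  have hbig : ∀ᶠ k : ℕ in atTop, 2 * (2 * k * (2 * k + 1)) ≤ 2 ^ k := by
    have h1 := (isLittleO_pow_const_const_pow_of_one_lt (R := ℝ) 2 (r := 2) (by norm_num)).bound
      (show (0:ℝ) < 1/12 by norm_num)
    filter_upwards [h1] with k hk
    simp only [norm_pow, Real.norm_natCast, Real.norm_ofNat] at hk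
    have hk2 : 12 * k ^ 2 ≤ 2 ^ k := by
      have : 12 * (k:ℝ) ^ 2 ≤ 2 ^ k := by linarith
      exact_mod_cast this
    rcases Nat.eq_zero_or_pos k with rfl | h
    · simp
    · nlinarith
  refine squeeze_zero' (Eventually.of_forall fun _ => abs_nonneg _) ?_ hlim
  filter_upwards [hbig] with k hk
  set m := ⌊(2 - ε) * (k : ℝ)⌋₊ with hm
  have hk0 : (0:ℝ) ≤ k := Nat.cast_nonneg k
  by_cases hε2 : 2 ≤ ε
  · have hm0 : m = 0 := Nat.floor_of_nonpos (by nlinarith)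
    rw [hm0]
    have := s16_tau k 0 (by simp)
    have hb : s16Bad k 0 (Submodule.span ℝ {allOne k}) = 0 := by
      unfold s16Bad
      rw [Finset.card_eq_zero, Finset.filter_eq_empty_iff]
      intro y _
      simp only [not_not]
      exact ⟨0, by simp, fun i => i.elim0⟩
    rw [hb] at this
    simp only [Nat.cast_zero, zero_div, mul_zero] at this
    exact this.trans (by positivity)
  · push Not at hε2
    have hmle : (m:ℝ) ≤ (2 - ε) * k := Nat.floor_le (by nlinarith)
    have hm2 : m ≤ 2 * k := by
      have : (m:ℝ) ≤ 2 * k := by nlinarith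
      exact_mod_cast this
    refine (s16_tau k m ?_).trans ?_
    · refine le_trans ?_ hk
      gcongr
    · apply mul_le_mul_of_nonneg_left _ (by norm_num)
      rw [div_le_iff₀ (by positivity), mul_comm]
      refine (s16_main k (ε/2) ((1 - ε/4) * k) (by positivity) (by nlinarith) m _).trans ?_
      apply mul_le_mul_of_nonneg_left _ (by positivity)
      have hfr : (Module.finrank ℝ ↥(Submodule.span ℝ {allOne k}) : ℝ) ≤ 1 := by
        have q2 := finrank_span_le_card (R := ℝ) ({allOne k} : Set (Fin k → ℝ))
        simp at q2
        exact_mod_cast q2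
      apply add_le_add
      · apply Real.exp_le_exp.2
        have e1 := mul_le_mul_of_nonneg_left hfr hε.le
        have e2 := mul_le_mul_of_nonneg_right hmle
          (show 0 ≤ ε/2/2 + (ε/2)^2/8 by positivity)
        have e3 : 0 ≤ ε^3 * k := by positivity
        nlinarith
      · have : ((1 - ε/4) * (k:ℝ) - k)/2 = -(ε/8) * k := by ring
        rw [this, ← mul_assoc]
        apply mul_le_mul_of_nonneg_right _ (Real.exp_pos _).le
        exact_mod_cast hm2

end
end

section
/- For all d and all n with 3 ≤ n ≤ 2^d − 1, the strict inequality π(d,n) > π(d,n+1) holds; that is, π(d,·) is strictly monotonically decreasing. -/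
open Finset Filter MeasureTheory

open scoped Classical

noncomputable section

lemma card_pmCube (d : ℕ) : (pmCube d).card = 2 ^ d := by
  unfold pmCube
  rw [Finset.card_image_of_injective]
  · simp
  · intro f g h
    funext i
    have := congrFun h i
    simp only at this
    cases hf : f i <;> cases hg : g i <;> simp [hf, hg] at this ⊢ <;> linarith

lemma mem_pmCube {d : ℕ} (z : Fin d → ℝ) : z ∈ pmCube d ↔ ∀ i, z i = 1 ∨ z i = -1 := by
  unfold pmCube
  simp only [Finset.mem_image, Finset.mem_univ, true_and]
  constructor
  · rintro ⟨f, rfl⟩ i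
    by_cases h : f i <;> simp [h]
  · intro h
    refine ⟨fun i => decide (z i = 1), ?_⟩
    funext i
    rcases h i with h | h
    · simp [h]
    · simp [h]; norm_num

lemma isExposed_of_lt {d : ℕ} (X : Finset (Fin d → ℝ)) (v w : Fin d → ℝ)
    (hv : v ∈ X) (hw : w ∈ X) (l : StrongDual ℝ (Fin d → ℝ)) (hvw : l v = l w)
    (h : ∀ z ∈ X, z ≠ v → z ≠ w → l z < l v) :
    IsExposed ℝ (convexHull ℝ (X : Set (Fin d → ℝ))) (segment ℝ v w) := by
  intro _
  refine ⟨l, ?_⟩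
  have hseg : ∀ z ∈ segment ℝ v w, l z = l v := by
    rintro z ⟨a, b, ha, hb, hab, rfl⟩
    simp only [map_add, map_smul, smul_eq_mul, ← hvw]
    rw [← add_mul, hab, one_mul]
  have hK : Convex ℝ {z | l z < l v ∨ z ∈ segment ℝ v w} := by
    rw [convex_iff_forall_pos]
    intro p hp q hq a b ha hb hab
    have key : ∀ z ∈ {z | l z < l v ∨ z ∈ segment ℝ v w}, l z ≤ l v := by
      rintro z (hz | hz)
      · exact hz.le
      · exact (hseg z hz).le
    have hp' := key p hp
    have hq' := key q hq
    have hb' : b = 1 - a := by linarith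
    rcases hp with hp | hp
    · left
      simp only [map_add, map_smul, smul_eq_mul]
      have : a * l p < a * l v := mul_lt_mul_of_pos_left hp ha
      have : b * l q ≤ b * l v := mul_le_mul_of_nonneg_left hq' hb.le
      have : a * l v + b * l v = l v := by rw [← add_mul, hab, one_mul]
      linarith
    · rcases hq with hq | hq
      · left
        simp only [map_add, map_smul, smul_eq_mul]
        have : b * l q < b * l v := mul_lt_mul_of_pos_left hq hb
        have : a * l p ≤ a * l v := mul_le_mul_of_nonneg_left hp' ha.le
        have : a * l v + b * l v = l v := by rw [← add_mul, hab, one_mul]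
        linarith
      · right
        exact convex_segment v w hp hq ha.le hb.le hab
  have hsub : convexHull ℝ (X : Set (Fin d → ℝ)) ⊆ {z | l z < l v ∨ z ∈ segment ℝ v w} := by
    apply convexHull_min _ hK
    intro z hz
    by_cases h1 : z = v
    · right; rw [h1]; exact left_mem_segment ℝ v w
    by_cases h2 : z = w
    · right; rw [h2]; exact right_mem_segment ℝ v w
    exact Or.inl (h z hz h1 h2)
  have hvc : v ∈ convexHull ℝ (X : Set (Fin d → ℝ)) := subset_convexHull ℝ _ hv
  have hwc : w ∈ convexHull ℝ (X : Set (Fin d → ℝ)) := subset_convexHull ℝ _ hw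
  ext z
  constructor
  · intro hz
    refine ⟨(convex_convexHull ℝ _).segment_subset hvc hwc hz, fun y hy => ?_⟩
    rw [hseg z hz]
    rcases hsub hy with hy | hy
    · exact hy.le
    · exact (hseg y hy).le
  · rintro ⟨hz, hmax⟩
    rcases hsub hz with h' | h'
    · exact absurd (hmax v hvc) (not_le.mpr h')
    · exact h'

lemma edgeEvent_erase {d : ℕ} (X e : Finset (Fin d → ℝ)) (x : Fin d → ℝ) (he : e ⊆ X)
    (hx : x ∉ e) (h : EdgeEvent (X, e)) : EdgeEvent (X.erase x, e) := by
  obtain ⟨v, w, rfl, hne, hexp⟩ := h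
  refine ⟨v, w, rfl, hne, ?_⟩
  simp only [Finset.mem_insert, Finset.mem_singleton, not_or] at hx
  refine hexp.mono (convexHull_mono (by simp)) ?_
  apply (convex_convexHull ℝ _).segment_subset <;> apply subset_convexHull
  · simp only [Finset.mem_coe]
    exact Finset.mem_erase.mpr ⟨Ne.symm hx.1, he (by simp)⟩
  · simp only [Finset.mem_coe]
    exact Finset.mem_erase.mpr ⟨Ne.symm hx.2, he (by simp)⟩

/-- Witness for strictness. -/
lemma exists_witness (k n : ℕ) (hn3 : 3 ≤ n) (hn : n ≤ 2 ^ (k + 2) - 1) :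
    ∃ X e : Finset (Fin (k + 2) → ℝ), ∃ x, X ⊆ pmCube (k + 2) ∧ X.card = n ∧ e ⊆ X ∧
      e.card = 2 ∧ x ∈ pmCube (k + 2) ∧ x ∉ X ∧ EdgeEvent (X, e) ∧
      ¬ EdgeEvent (insert x X, e) := by
  let pt : ℝ → ℝ → (Fin (k + 2) → ℝ) := fun a b => Fin.cons a (Fin.cons b (fun _ => 1))
  have pt0 : ∀ a b, pt a b 0 = a := fun a b => rfl
  have pt1 : ∀ a b, pt a b 1 = b := fun a b => rfl
  have ptr : ∀ a b (i : Fin k), pt a b i.succ.succ = 1 := fun a b i => rfl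
  have ptmem : ∀ a b, (a = 1 ∨ a = -1) → (b = 1 ∨ b = -1) → pt a b ∈ pmCube (k + 2) := by
    intro a b ha hb
    rw [mem_pmCube]
    intro i
    refine Fin.cases ?_ (fun i => ?_) i
    · exact ha
    · refine Fin.cases ?_ (fun i => ?_) i
      · exact hb
      · exact Or.inl rfl
  have ptne : ∀ a b a' b', (a ≠ a' ∨ b ≠ b') → pt a b ≠ pt a' b' := by
    intro a b a' b' h heq
    rcases h with h | h
    · exact h (by have := congrFun heq 0; simpa [pt0] using this)
    · exact h (by have := congrFun heq 1; simpa [pt1] using this)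
  have pteq : ∀ z : Fin (k + 2) → ℝ, (∀ i : Fin k, z i.succ.succ = 1) → z = pt (z 0) (z 1) := by
    intro z hz
    funext i
    refine Fin.cases rfl (fun i => ?_) i
    refine Fin.cases rfl (fun i => ?_) i
    rw [hz, ptr]
  have hvw : pt 1 1 ≠ pt (-1) (-1) := ptne _ _ _ _ (Or.inl (by norm_num))
  have hvy : pt 1 1 ≠ pt (-1) 1 := ptne _ _ _ _ (Or.inl (by norm_num))
  have hwy : pt (-1) (-1) ≠ pt (-1) 1 := ptne _ _ _ _ (Or.inr (by norm_num))
  obtain ⟨X, hTX, hXU, hXn⟩ : ∃ X, ({pt 1 1, pt (-1) (-1), pt (-1) 1} : Finset _) ⊆ X ∧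
      X ⊆ (pmCube (k + 2)).erase (pt 1 (-1)) ∧ X.card = n := by
    apply Finset.exists_subsuperset_card_eq
    · intro z hz
      simp only [Finset.mem_insert, Finset.mem_singleton] at hz
      rw [Finset.mem_erase]
      rcases hz with rfl | rfl | rfl
      · exact ⟨ptne _ _ _ _ (Or.inr (by norm_num)), ptmem _ _ (by simp) (by simp)⟩
      · exact ⟨ptne _ _ _ _ (Or.inl (by norm_num)), ptmem _ _ (by simp) (by simp)⟩
      · exact ⟨ptne _ _ _ _ (Or.inl (by norm_num)), ptmem _ _ (by simp) (by simp)⟩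
    · rw [Finset.card_eq_three.mpr ⟨_, _, _, hvw, hvy, hwy, rfl⟩]; exact hn3
    · rw [Finset.card_erase_of_mem (ptmem _ _ (by simp) (by simp)), card_pmCube]; exact hn
  have hvX : pt 1 1 ∈ X := hTX (by simp)
  have hwX : pt (-1) (-1) ∈ X := hTX (by simp)
  have hyX : pt (-1) 1 ∈ X := hTX (by simp)
  have hxX : pt 1 (-1) ∉ X := fun h => (Finset.mem_erase.mp (hXU h)).1 rfl
  refine ⟨X, {pt 1 1, pt (-1) (-1)}, pt 1 (-1), fun z hz => (Finset.mem_erase.mp (hXU hz)).2,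
    hXn, ?_, Finset.card_pair hvw, ptmem _ _ (by simp) (by simp), hxX, ?_, ?_⟩
  · intro z hz
    simp only [Finset.mem_insert, Finset.mem_singleton] at hz
    rcases hz with rfl | rfl
    · exact hvX
    · exact hwX
  · refine ⟨_, _, rfl, hvw, ?_⟩
    let l : StrongDual ℝ (Fin (k + 2) → ℝ) :=
      (ContinuousLinearMap.proj (R := ℝ) (φ := fun _ : Fin (k + 2) => ℝ) 0 : StrongDual ℝ _) -
        ContinuousLinearMap.proj (R := ℝ) (φ := fun _ : Fin (k + 2) => ℝ) 1 +
        (2 : ℝ) • ∑ i : Fin k,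
          ContinuousLinearMap.proj (R := ℝ) (φ := fun _ : Fin (k + 2) => ℝ) i.succ.succ
    have hl : ∀ z, l z = z 0 - z 1 + 2 * ∑ i : Fin k, z i.succ.succ := by
      intro z
      simp [l, ContinuousLinearMap.sum_apply]
    have hlp : ∀ a b, l (pt a b) = a - b + 2 * k := by
      intro a b
      rw [hl]
      simp [pt0, pt1, ptr]
    refine isExposed_of_lt X _ _ hvX hwX l (by rw [hlp, hlp]; ring) ?_
    intro z hz hzv hzw
    have hzx : z ≠ pt 1 (-1) := fun h => hxX (h ▸ hz)
    have hzC := (mem_pmCube z).mp (Finset.mem_erase.mp (hXU hz)).2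
    by_cases hr : ∀ i : Fin k, z i.succ.succ = 1
    · have hze := pteq z hr
      rcases hzC 0 with h0 | h0 <;> rcases hzC 1 with h1 | h1 <;> rw [h0, h1] at hze
      · exact absurd hze hzv
      · exact absurd hze hzx
      · rw [hze, hlp, hlp]; linarith
      · exact absurd hze hzw
    · push Not at hr
      obtain ⟨j, hj⟩ := hr
      have hj' : z j.succ.succ = -1 := (hzC _).resolve_left hj
      have hs : ∑ i : Fin k, z i.succ.succ ≤ ∑ i : Fin k, ((1 : ℝ) - if i = j then 2 else 0) := by
        apply Finset.sum_le_sum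
        intro i _
        by_cases hij : i = j
        · subst hij; simp [hj']; norm_num
        · simp only [hij, if_false, sub_zero]
          rcases hzC i.succ.succ with h | h <;> rw [h] <;> norm_num
      have hs2 : ∑ i : Fin k, ((1 : ℝ) - if i = j then 2 else 0) = k - 2 := by
        simp
      rw [hs2] at hs
      rw [hlp, hl]
      rcases hzC 0 with h0 | h0 <;> rcases hzC 1 with h1 | h1 <;> rw [h0, h1] <;> linarith
  · rintro ⟨v, w, he, hne, hexp⟩
    simp only at he hexp
    have hsegeq : segment ℝ v w = segment ℝ (pt 1 1) (pt (-1) (-1)) := by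
      have hv : v ∈ ({pt 1 1, pt (-1) (-1)} : Finset _) := he ▸ by simp
      have hw : w ∈ ({pt 1 1, pt (-1) (-1)} : Finset _) := he ▸ by simp
      simp only [Finset.mem_insert, Finset.mem_singleton] at hv hw
      rcases hv with rfl | rfl <;> rcases hw with rfl | rfl
      · exact absurd rfl hne
      · rfl
      · exact segment_symm ℝ _ _
      · exact absurd rfl hne
    rw [hsegeq] at hexp
    have hmid : (1 / 2 : ℝ) • pt 1 (-1) + (1 / 2 : ℝ) • pt (-1) 1 =
        (1 / 2 : ℝ) • pt 1 1 + (1 / 2 : ℝ) • pt (-1) (-1) := by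
      funext i
      refine Fin.cases ?_ (fun i => ?_) i
      · simp [pt0]
      · refine Fin.cases ?_ (fun i => ?_) i
        · simp [pt1]
        · simp [ptr]
    have hx : pt 1 (-1) ∈ segment ℝ (pt 1 1) (pt (-1) (-1)) := by
      refine hexp.isExtreme.2 (x := pt 1 (-1)) (y := pt (-1) 1)
        (z := (1 / 2 : ℝ) • pt 1 (-1) + (1 / 2 : ℝ) • pt (-1) 1) ?_ ?_ ?_ ?_
      · exact subset_convexHull ℝ _ (by simp)
      · exact subset_convexHull ℝ _ (by simp [hyX])
      · rw [hmid]
        exact ⟨1 / 2, 1 / 2, by norm_num, by norm_num, by norm_num, rfl⟩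
      · exact ⟨1 / 2, 1 / 2, by norm_num, by norm_num, by norm_num, rfl⟩
    obtain ⟨a, b, ha, hb, hab, h⟩ := hx
    have h0 := congrFun h 0
    have h1 := congrFun h 1
    simp only [Pi.add_apply, Pi.smul_apply, pt0, pt1, smul_eq_mul] at h0 h1
    linarith

lemma mem_edgeSpace {d n : ℕ} (p : Finset (Fin d → ℝ) × Finset (Fin d → ℝ)) :
    p ∈ edgeSpace d n ↔ p.1 ⊆ pmCube d ∧ p.1.card = n ∧ p.2 ⊆ p.1 ∧ p.2.card = 2 := by
  unfold edgeSpace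
  simp only [Finset.mem_filter, Finset.mem_product, Finset.mem_powersetCard]
  constructor
  · rintro ⟨⟨⟨h1, h2⟩, h3, h4⟩, h5⟩
    exact ⟨h1, h2, h5, h4⟩
  · rintro ⟨h1, h2, h5, h4⟩
    exact ⟨⟨⟨h1, h2⟩, h5.trans h1, h4⟩, h5⟩

abbrev PairTy (d : ℕ) := Finset (Fin d → ℝ) × Finset (Fin d → ℝ)

def upS {d : ℕ} (A : Finset (PairTy d)) : Finset (Σ _ : PairTy d, (Fin d → ℝ)) :=
  A.sigma (fun p => p.1 \ p.2)

def downS {d : ℕ} (A : Finset (PairTy d)) : Finset (Σ _ : PairTy d, (Fin d → ℝ)) :=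
  A.sigma (fun p => pmCube d \ p.1)

lemma card_upS {d n : ℕ} (A : Finset (PairTy d)) (hA : A ⊆ edgeSpace d (n + 1)) :
    (upS A).card = A.card * (n - 1) := by
  unfold upS
  rw [Finset.card_sigma, Finset.sum_const_nat]
  intro p hp
  obtain ⟨h1, h2, h3, h4⟩ := (mem_edgeSpace p).mp (hA hp)
  rw [Finset.card_sdiff_of_subset h3, h2, h4]
  omega

lemma card_downS {d n : ℕ} (A : Finset (PairTy d)) (hA : A ⊆ edgeSpace d n) :
    (downS A).card = A.card * (2 ^ d - n) := by
  unfold downS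
  rw [Finset.card_sigma, Finset.sum_const_nat]
  intro p hp
  obtain ⟨h1, h2, h3, h4⟩ := (mem_edgeSpace p).mp (hA hp)
  rw [Finset.card_sdiff_of_subset h1, h2, card_pmCube]

def shiftS {d : ℕ} (s : Σ _ : PairTy d, (Fin d → ℝ)) : Σ _ : PairTy d, (Fin d → ℝ) :=
  ⟨(s.1.1.erase s.2, s.1.2), s.2⟩

lemma shiftS_inj {d : ℕ} (A : Finset (PairTy d)) : Set.InjOn shiftS (upS A : Set (Σ _ : PairTy d, (Fin d → ℝ))) := by
  rintro ⟨⟨X, e⟩, x⟩ h ⟨⟨X', e'⟩, x'⟩ h' heq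
  simp only [upS, Finset.mem_coe, Finset.mem_sigma, Finset.mem_sdiff] at h h'
  simp only [shiftS, Sigma.mk.injEq, Prod.mk.injEq, heq_eq_eq] at heq
  obtain ⟨⟨h1, rfl⟩, rfl⟩ := heq
  have : X = X' := by
    rw [← Finset.insert_erase h.2.1, ← Finset.insert_erase h'.2.1, h1]
  rw [this]

lemma shiftS_mem {d n : ℕ} (s : Σ _ : PairTy d, (Fin d → ℝ)) (hs : s ∈ upS (edgeSpace d (n + 1))) :
    shiftS s ∈ downS (edgeSpace d n) := by
  obtain ⟨⟨X, e⟩, x⟩ := s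
  simp only [upS, Finset.mem_sigma, Finset.mem_sdiff, mem_edgeSpace] at hs
  obtain ⟨⟨h1, h2, h3, h4⟩, h5, h6⟩ := hs
  simp only [shiftS, downS, Finset.mem_sigma, Finset.mem_sdiff, mem_edgeSpace]
  refine ⟨⟨(Finset.erase_subset _ _).trans h1, ?_, ?_, h4⟩, h1 h5, by simp⟩
  · rw [Finset.card_erase_of_mem h5, h2]; rfl
  · exact Finset.subset_erase.mpr ⟨h3, h6⟩

lemma total_eq (d n : ℕ) :
    (edgeSpace d (n + 1)).card * (n - 1) = (edgeSpace d n).card * (2 ^ d - n) := by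
  rw [← card_upS _ (Finset.Subset.refl _), ← card_downS _ (Finset.Subset.refl _),
    ← Finset.card_image_of_injOn (shiftS_inj _)]
  congr 1
  apply Finset.Subset.antisymm
  · intro t ht
    obtain ⟨s, hs, rfl⟩ := Finset.mem_image.mp ht
    exact shiftS_mem s hs
  · rintro ⟨⟨X, e⟩, x⟩ ht
    simp only [downS, Finset.mem_sigma, Finset.mem_sdiff, mem_edgeSpace] at ht
    obtain ⟨⟨h1, h2, h3, h4⟩, h5, h6⟩ := ht
    refine Finset.mem_image.mpr ⟨⟨(insert x X, e), x⟩, ?_, ?_⟩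
    · simp only [upS, Finset.mem_sigma, Finset.mem_sdiff, mem_edgeSpace]
      refine ⟨⟨Finset.insert_subset h5 h1, ?_, h3.trans (Finset.subset_insert _ _), h4⟩,
        Finset.mem_insert_self _ _, fun h => h6 (h3 h)⟩
      rw [Finset.card_insert_of_notMem h6, h2]
    · simp only [shiftS]
      rw [Finset.erase_insert h6]

lemma edge_lt (k n : ℕ) (hn3 : 3 ≤ n) (hn : n ≤ 2 ^ (k + 2) - 1) :
    ((edgeSpace (k + 2) (n + 1)).filter (fun p => EdgeEvent p)).card * (n - 1) <
      ((edgeSpace (k + 2) n).filter (fun p => EdgeEvent p)).card * (2 ^ (k + 2) - n) := by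
  rw [← card_upS _ (Finset.filter_subset _ _), ← card_downS _ (Finset.filter_subset _ _),
    ← Finset.card_image_of_injOn (shiftS_inj _)]
  apply Finset.card_lt_card
  rw [Finset.ssubset_iff_of_subset]
  · obtain ⟨X, e, x, h1, h2, h3, h4, h5, h6, h7, h8⟩ := exists_witness k n hn3 hn
    refine ⟨⟨(X, e), x⟩, ?_, ?_⟩
    · simp only [downS, Finset.mem_sigma, Finset.mem_sdiff, Finset.mem_filter, mem_edgeSpace]
      exact ⟨⟨⟨h1, h2, h3, h4⟩, h7⟩, h5, h6⟩
    · intro h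
      obtain ⟨⟨⟨X', e'⟩, x'⟩, hs, heq⟩ := Finset.mem_image.mp h
      simp only [upS, Finset.mem_sigma, Finset.mem_sdiff, Finset.mem_filter] at hs
      simp only [shiftS, Sigma.mk.injEq, Prod.mk.injEq, heq_eq_eq] at heq
      obtain ⟨⟨rfl, rfl⟩, rfl⟩ := heq
      rw [Finset.insert_erase hs.2.1] at h8
      exact h8 hs.1.2
  · intro t ht
    obtain ⟨s, hs, rfl⟩ := Finset.mem_image.mp ht
    obtain ⟨⟨X, e⟩, x⟩ := s
    have hs' : (⟨(X, e), x⟩ : Σ _ : PairTy (k + 2), (Fin (k + 2) → ℝ)) ∈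
        upS (edgeSpace (k + 2) (n + 1)) := by
      simp only [upS, Finset.mem_sigma, Finset.mem_filter] at hs ⊢
      exact ⟨hs.1.1, hs.2⟩
    have := shiftS_mem _ hs'
    simp only [upS, Finset.mem_sigma, Finset.mem_sdiff, Finset.mem_filter] at hs
    simp only [shiftS, downS, Finset.mem_sigma, Finset.mem_filter] at this ⊢
    exact ⟨⟨this.1, edgeEvent_erase X e x ((mem_edgeSpace _).mp hs.1.1).2.2.1 hs.2.2 hs.1.2⟩,
      this.2⟩

-- STATEMENT 18
theorem statement18 (d n : ℕ) (hn3 : 3 ≤ n) (hn : n ≤ 2 ^ d - 1) :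
    piEdge d (n + 1) < piEdge d n := by
  obtain ⟨k, rfl⟩ : ∃ k, d = k + 2 := by
    match d, hn with
    | 0, hn => simp at hn; omega
    | 1, hn => norm_num at hn; omega
    | k + 2, _ => exact ⟨k, rfl⟩
  have h1 := total_eq (k + 2) n
  have h2 := edge_lt k n hn3 hn
  have hM : 0 < 2 ^ (k + 2) - n := by
    have : 0 < 2 ^ (k + 2) := by positivity
    omega
  have hm : 0 < n - 1 := by omega
  have hT : 0 < (edgeSpace (k + 2) n).card := by
    obtain ⟨X, e, x, g1, g2, g3, g4, -⟩ := exists_witness k n hn3 hn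
    exact Finset.card_pos.mpr ⟨(X, e), (mem_edgeSpace _).mpr ⟨g1, g2, g3, g4⟩⟩
  have hT' : 0 < (edgeSpace (k + 2) (n + 1)).card := by
    apply Nat.pos_of_mul_pos_right (b := n - 1)
    rw [h1]
    positivity
  unfold piEdge
  generalize ((edgeSpace (k + 2) (n + 1)).filter (fun p => EdgeEvent p)).card = a at *
  generalize ((edgeSpace (k + 2) n).filter (fun p => EdgeEvent p)).card = b at *
  generalize (edgeSpace (k + 2) (n + 1)).card = T' at *
  generalize (edgeSpace (k + 2) n).card = T at *
  generalize 2 ^ (k + 2) - n = M at *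
  generalize n - 1 = m at *
  rw [div_lt_div_iff₀ (by exact_mod_cast hT') (by exact_mod_cast hT)]
  have : a * T < b * T' := by
    apply Nat.lt_of_mul_lt_mul_right (a := M)
    calc a * T * M = a * (T * M) := by ring
      _ = (a * m) * T' := by rw [← h1]; ring
      _ < (b * M) * T' := Nat.mul_lt_mul_of_pos_right h2 hT'
      _ = b * T' * M := by ring
  exact_mod_cast this


end
end
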